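/- If in the definition of maximum RPS entropy the permutation number P(N,i) is replaced by the binomial coefficient C(N,i) and F(i) is replaced by ∑_{k=0}^{i} C(i,k) = 2^i, then log(∑_{i=1}^{N} C(N,i)(2^i - 1)) equals the maximum Deng entropy; i.e., the order-ignoring degeneration of max RPS entropy is max Deng entropy. -/

import Mathlib

open Finset

section SumPowerset

variable {α M : Type*} [AddCommMonoid M] (f : ℕ → M) (s : Finset α)

theorem sum_powerset_filter_card_apply_card (p : ℕ → Prop) [DecidablePred p] :
    ∑ A ∈ s.powerset with p #A, f #A = ∑ i ∈ range (#s + 1) with p i, (#s).choose i • f i := by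
  simpa only [sum_filter, smul_ite, smul_zero] using
    sum_powerset_apply_card fun i ↦ if p i then f i else 0

theorem sum_powerset_filter_ne_empty_apply_card [DecidableEq α] :
    ∑ A ∈ s.powerset with A ≠ ∅, f #A = ∑ i ∈ Icc 1 #s, (#s).choose i • f i := by
  have range_filter_ne_zero : {i ∈ range (#s + 1) | i ≠ 0} = Icc 1 #s := by grind
  simpa only [ne_eq, card_eq_zero, range_filter_ne_zero] using
    sum_powerset_filter_card_apply_card f s (· ≠ 0)

end SumPowerset

/-- Replacing P(N,i) by C(N,i) and F(i) by ∑_{k=0}^i C(i,k) = 2^i in the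
maximum RPS entropy formula yields the maximum Deng entropy. -/
theorem order_ignoring_degeneration (α : Type*) [Fintype α] [DecidableEq α] (N : ℕ)
    (hN : Fintype.card α = N) :
    (∀ i : ℕ, ∑ k ∈ Finset.range (i + 1), i.choose k = 2 ^ i) ∧
    Real.log ((∑ i ∈ Finset.Icc 1 N, N.choose i * (2 ^ i - 1 : ℕ) : ℝ))
      = Real.log ((∑ A ∈ Finset.univ.powerset.filter (· ≠ (∅ : Finset α)),
          (2 ^ A.card - 1 : ℕ) : ℝ)) := by
  refine ⟨Nat.sum_range_choose, congrArg Real.log ?_⟩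
  simpa only [card_univ, hN, nsmul_eq_mul] using
    (sum_powerset_filter_ne_empty_apply_card (fun i ↦ ((2 ^ i - 1 : ℕ) : ℝ)) (univ : Finset α)).symm
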